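/- There exists a constant C>0 depending only on T, ϕ_1, ϕ_2, π_1, π_2, λ_1, λ_2, G_1, G_2 (and not on N, M, the initial vector or the boundary data) such that every discrete solution (u^n) satisfies ∑_{i=1,2} ∑_{n=0}^{M−1} δt ∑_{j∈J_{int,i}} (ξ_i(u^{n+1}_{j+1/2})−ξ_i(u^{n+1}_{j−1/2}))²/δx + ∑_{n=0}^{M−1} δt [ (ξ_1(c^{n+1})−ξ_1(u^{n+1}_{−1/2}))²/(δx/2) + (ξ_2(u^{n+1}_{1/2})−ξ_2(d^{n+1}))²/(δx/2) ] ≤ C, where J_{int,1}={−N+1,…,−1}, J_{int,2}={1,…,N−1}, and (c^{n+1},d^{n+1})=(c(u^{n+1}_{−1/2},u^{n+1}_{1/2}),d(u^{n+1}_{−1/2},u^{n+1}_{1/2})). -/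

import Mathlib

open Set

noncomputable section

/-- The monotone graph `π̃` associated to an increasing capillary pressure function `π`. -/
def tildePi (π : ℝ → ℝ) (s : ℝ) : Set ℝ :=
  if s = 0 then Set.Iic (π 0) else if s = 1 then Set.Ici (π 1) else {π s}

/-- The connection condition `π̃₁(c) ∩ π̃₂(d) ≠ ∅`. -/
def Connects (π₁ π₂ : ℝ → ℝ) (c d : ℝ) : Prop :=
  (tildePi π₁ c ∩ tildePi π₂ d).Nonempty

/-- The porosity `ϕ_{i(j)}` of the cell `(x_j, x_{j+1})` (indexed by `j`, representing the
unknown `u_{j+1/2}`): `ϕ₁` if `j < 0` (cell in `Ω₁`), `ϕ₂` if `j ≥ 0` (cell in `Ω₂`). -/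
def phiCoef (ϕ₁ ϕ₂ : ℝ) (j : ℤ) : ℝ := if j < 0 then ϕ₁ else ϕ₂

/-- The numerical flux `F_j[v]` through `x_j`, for a vector `v` (where `v j` stands for
`v_{j+1/2}`), with boundary data `ub = ū`, `uB = ū̄` and interface function `c`. -/
def numFlux (G₁ G₂ : ℝ → ℝ → ℝ) (φ₁ φ₂ : ℝ → ℝ) (c : ℝ → ℝ → ℝ) (δx : ℝ) (N : ℤ)
    (ub uB : ℝ) (v : ℤ → ℝ) (j : ℤ) : ℝ :=
  if j = -N then G₁ ub (v (-N))
  else if j = N then G₂ (v (N - 1)) uB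
  else if j < 0 then G₁ (v (j - 1)) (v j) - (φ₁ (v j) - φ₁ (v (j - 1))) / δx
  else if j = 0 then
    G₁ (v (-1)) (c (v (-1)) (v 0)) - 2 * (φ₁ (c (v (-1)) (v 0)) - φ₁ (v (-1))) / δx
  else G₂ (v (j - 1)) (v j) - (φ₂ (v j) - φ₂ (v (j - 1))) / δx

/-- The left-hand side of the implicit finite volume scheme at time step `n → n+1`,
cell `j`. -/
def schemeLHS (G₁ G₂ : ℝ → ℝ → ℝ) (φ₁ φ₂ : ℝ → ℝ) (c : ℝ → ℝ → ℝ)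
    (ϕ₁ ϕ₂ δx δt : ℝ) (N : ℤ) (ubar ubbar : ℕ → ℝ) (u : ℕ → ℤ → ℝ)
    (n : ℕ) (j : ℤ) : ℝ :=
  phiCoef ϕ₁ ϕ₂ j * (u (n + 1) j - u n j) * δx / δt
    + numFlux G₁ G₂ φ₁ φ₂ c δx N (ubar (n + 1)) (ubbar (n + 1)) (u (n + 1)) (j + 1)
    - numFlux G₁ G₂ φ₁ φ₂ c δx N (ubar (n + 1)) (ubbar (n + 1)) (u (n + 1)) j

/-- `u` takes values in `[0,1]` on the computational cells up to time level `M`. -/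
def InRange (N : ℤ) (M : ℕ) (u : ℕ → ℤ → ℝ) : Prop :=
  ∀ n ≤ M, ∀ j ∈ Finset.Icc (-N) (N - 1), u n j ∈ Set.Icc (0 : ℝ) 1

/-- `u` is a discrete solution of the implicit finite volume scheme. -/
def IsDiscreteSolution (G₁ G₂ : ℝ → ℝ → ℝ) (φ₁ φ₂ : ℝ → ℝ) (c : ℝ → ℝ → ℝ)
    (ϕ₁ ϕ₂ δx δt : ℝ) (N : ℤ) (M : ℕ) (ubar ubbar : ℕ → ℝ) (u : ℕ → ℤ → ℝ) : Prop :=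
  InRange N M u ∧ ∀ n < M, ∀ j ∈ Finset.Icc (-N) (N - 1),
    schemeLHS G₁ G₂ φ₁ φ₂ c ϕ₁ ϕ₂ δx δt N ubar ubbar u n j = 0

/-- `u` is a discrete supersolution of the implicit finite volume scheme. -/
def IsDiscreteSupersolution (G₁ G₂ : ℝ → ℝ → ℝ) (φ₁ φ₂ : ℝ → ℝ) (c : ℝ → ℝ → ℝ)
    (ϕ₁ ϕ₂ δx δt : ℝ) (N : ℤ) (M : ℕ) (ubar ubbar : ℕ → ℝ) (u : ℕ → ℤ → ℝ) : Prop :=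
  InRange N M u ∧ ∀ n < M, ∀ j ∈ Finset.Icc (-N) (N - 1),
    0 ≤ schemeLHS G₁ G₂ φ₁ φ₂ c ϕ₁ ϕ₂ δx δt N ubar ubbar u n j

/-- `u` is a discrete subsolution of the implicit finite volume scheme. -/
def IsDiscreteSubsolution (G₁ G₂ : ℝ → ℝ → ℝ) (φ₁ φ₂ : ℝ → ℝ) (c : ℝ → ℝ → ℝ)
    (ϕ₁ ϕ₂ δx δt : ℝ) (N : ℤ) (M : ℕ) (ubar ubbar : ℕ → ℝ) (u : ℕ → ℤ → ℝ) : Prop :=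
  InRange N M u ∧ ∀ n < M, ∀ j ∈ Finset.Icc (-N) (N - 1),
    schemeLHS G₁ G₂ φ₁ φ₂ c ϕ₁ ϕ₂ δx δt N ubar ubbar u n j ≤ 0

/-- `ξ(s) = ∫₀^s √(λ(a)) π'(a) da`. -/
def xi (lam πd : ℝ → ℝ) (s : ℝ) : ℝ := ∫ a in (0:ℝ)..s, Real.sqrt (lam a) * πd a

open MeasureTheory in
lemma hx_cs (lam πd : ℝ → ℝ) (a b : ℝ) (ha : 0 ≤ a) (hab : a ≤ b) (hb : b ≤ 1)
    (hnn : ∀ s ∈ Icc (0:ℝ) 1, 0 ≤ πd s) (hint : IntervalIntegrable πd volume 0 1)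
    (hlc : ContinuousOn lam (Icc 0 1)) (hl : ∀ s ∈ Icc (0:ℝ) 1, 0 ≤ lam s) :
    (∫ x in a..b, Real.sqrt (lam x) * πd x) ^ 2
      ≤ (∫ x in a..b, lam x * πd x) * ∫ x in a..b, πd x := by
  have hsub : uIcc a b ⊆ Icc 0 1 := by
    rw [uIcc_of_le hab]; exact Icc_subset_Icc ha hb
  have h0 : IntervalIntegrable πd volume a b :=
    hint.mono_set (by rw [uIcc_of_le (zero_le_one' ℝ)]; exact hsub)
  have h1 : IntervalIntegrable (fun x => lam x * πd x) volume a b :=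
    h0.continuousOn_mul (hlc.mono hsub)
  have h2 : IntervalIntegrable (fun x => Real.sqrt (lam x) * πd x) volume a b :=
    h0.continuousOn_mul ((hlc.mono hsub).sqrt)
  have key : ∀ t : ℝ, 0 ≤ (∫ x in a..b, πd x) * (t * t)
      + (2 * ∫ x in a..b, Real.sqrt (lam x) * πd x) * t + ∫ x in a..b, lam x * πd x := by
    intro t
    have e : ∫ x in a..b, (Real.sqrt (lam x) + t) ^ 2 * πd x
        = (∫ x in a..b, πd x) * (t * t)
      + (2 * ∫ x in a..b, Real.sqrt (lam x) * πd x) * t + ∫ x in a..b, lam x * πd x := by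
      have : ∫ x in a..b, (Real.sqrt (lam x) + t) ^ 2 * πd x
        = ∫ x in a..b, (t * t) * πd x + (2 * t) * (Real.sqrt (lam x) * πd x) + lam x * πd x := by
        apply intervalIntegral.integral_congr
        intro x hx
        have := Real.sq_sqrt (hl x (hsub hx))
        simp only
        linear_combination πd x * this
      rw [this, intervalIntegral.integral_add ((h0.const_mul _).add (h2.const_mul _)) h1,
        intervalIntegral.integral_add (h0.const_mul _) (h2.const_mul _),
        intervalIntegral.integral_const_mul, intervalIntegral.integral_const_mul]
      ring
    rw [← e]
    apply intervalIntegral.integral_nonneg hab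
    intro x hx
    exact mul_nonneg (sq_nonneg _) (hnn x ⟨ha.trans hx.1, hx.2.trans hb⟩)
  have := discrim_le_zero key
  unfold discrim at this
  nlinarith

/-- All the data-dependent estimates needed on one side. -/
lemma hx_side (π πd lam φ f : ℝ → ℝ) (G : ℝ → ℝ → ℝ)
    (hπlip : ∃ K, LipschitzOnWith K π (Icc 0 1))
    (hπmono : StrictMonoOn π (Icc 0 1))
    (hnn : ∀ s ∈ Icc (0:ℝ) 1, 0 ≤ πd s)
    (hint : IntervalIntegrable πd MeasureTheory.volume 0 1)
    (hrep : ∀ s ∈ Icc (0:ℝ) 1, ∀ t ∈ Icc (0:ℝ) 1, π t - π s = ∫ a in s..t, πd a)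
    (hllip : ∃ K, LipschitzOnWith K lam (Icc 0 1))
    (hl : ∀ s ∈ Icc (0:ℝ) 1, 0 ≤ lam s)
    (hφ : ∀ s ∈ Icc (0:ℝ) 1, φ s = ∫ a in (0:ℝ)..s, lam a * πd a)
    (hGlip : ∃ K, LipschitzOnWith K (fun p : ℝ × ℝ => G p.1 p.2) (Icc 0 1 ×ˢ Icc 0 1))
    (hGmono : ∀ b ∈ Icc (0:ℝ) 1, MonotoneOn (fun a => G a b) (Icc 0 1))
    (hGanti : ∀ a ∈ Icc (0:ℝ) 1, AntitoneOn (fun b => G a b) (Icc 0 1))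
    (hflip : ∃ K, LipschitzOnWith K f (Icc 0 1))
    (hdiag : ∀ s ∈ Icc (0:ℝ) 1, G s s = f s) :
    ∃ (Ψ P : ℝ → ℝ) (B : ℝ), 0 ≤ B ∧
      (∀ a ∈ Icc (0:ℝ) 1, ∀ b ∈ Icc (0:ℝ) 1, ∀ h : ℝ, 0 < h →
        (G a b - (φ b - φ a) / h) * (π b - π a)
          ≤ Ψ b - Ψ a - (xi lam πd b - xi lam πd a) ^ 2 / h) ∧
      (∀ a ∈ Icc (0:ℝ) 1, ∀ b ∈ Icc (0:ℝ) 1, P b - P a ≤ (b - a) * π b) ∧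
      (∀ a ∈ Icc (0:ℝ) 1, |π a| ≤ B ∧ |Ψ a| ≤ B ∧ |P a| ≤ B) ∧
      (∀ a ∈ Icc (0:ℝ) 1, ∀ b ∈ Icc (0:ℝ) 1, |G a b| ≤ B) := by
  obtain ⟨_, hπlip⟩ := hπlip
  obtain ⟨_, hllip⟩ := hllip
  obtain ⟨_, hGlip⟩ := hGlip
  obtain ⟨_, hflip⟩ := hflip
  have hπc := hπlip.continuousOn
  have hlc := hllip.continuousOn
  have hGc := hGlip.continuousOn
  have hfc := hflip.continuousOn
  have h01 : uIcc (0:ℝ) 1 = Icc 0 1 := uIcc_of_le zero_le_one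
  have hsubI : ∀ a ∈ Icc (0:ℝ) 1, ∀ b ∈ Icc (0:ℝ) 1, uIcc a b ⊆ Icc 0 1 := by
    intro a ha b hb
    rw [← h01] at ha hb ⊢
    exact uIcc_subset_uIcc ha hb
  have z0 : (0:ℝ) ∈ Icc (0:ℝ) 1 := by simp
  have hmulint : ∀ g : ℝ → ℝ, ContinuousOn g (Icc 0 1) → ∀ a ∈ Icc (0:ℝ) 1, ∀ b ∈ Icc (0:ℝ) 1,
      IntervalIntegrable (fun x => g x * πd x) MeasureTheory.volume a b := by
    intro g hg a ha b hb
    have h0 : IntervalIntegrable πd MeasureTheory.volume a b :=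
      hint.mono_set (by rw [h01]; exact hsubI a ha b hb)
    exact h0.continuousOn_mul (hg.mono (hsubI a ha b hb))
  have hdiff : ∀ g : ℝ → ℝ, ContinuousOn g (Icc 0 1) → ∀ a ∈ Icc (0:ℝ) 1, ∀ b ∈ Icc (0:ℝ) 1,
      (∫ x in (0:ℝ)..b, g x * πd x) - (∫ x in (0:ℝ)..a, g x * πd x)
        = ∫ x in a..b, g x * πd x := by
    intro g hg a ha b hb
    exact intervalIntegral.integral_interval_sub_left (hmulint g hg 0 z0 b hb)
      (hmulint g hg 0 z0 a ha)
  have hπint : ∀ a ∈ Icc (0:ℝ) 1, ∀ b ∈ Icc (0:ℝ) 1,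
      IntervalIntegrable π MeasureTheory.volume a b := by
    intro a ha b hb
    exact (hπc.mono (hsubI a ha b hb)).intervalIntegrable
  set Ψ : ℝ → ℝ := fun s => ∫ x in (0:ℝ)..s, f x * πd x with hΨ
  set P : ℝ → ℝ := fun s => ∫ x in (0:ℝ)..s, π x with hP
  have hΨc : ContinuousOn Ψ (Icc 0 1) := by
    have := intervalIntegral.continuousOn_primitive_interval'
      (hmulint f hfc 0 z0 1 (by simp)) (a := 0) (by simp)
    rwa [h01] at this
  have hPc : ContinuousOn P (Icc 0 1) := by
    have := intervalIntegral.continuousOn_primitive_interval'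
      (hπint 0 z0 1 (by simp)) (a := 0) (by simp)
    rwa [h01] at this
  obtain ⟨B1, hB1⟩ := isCompact_Icc.exists_bound_of_continuousOn hπc
  obtain ⟨B2, hB2⟩ := isCompact_Icc.exists_bound_of_continuousOn hΨc
  obtain ⟨B3, hB3⟩ := isCompact_Icc.exists_bound_of_continuousOn hPc
  obtain ⟨B4, hB4⟩ := (isCompact_Icc.prod isCompact_Icc).exists_bound_of_continuousOn hGc
  simp only [Real.norm_eq_abs] at hB1 hB2 hB3 hB4
  refine ⟨Ψ, P, |B1| + |B2| + |B3| + |B4|, by positivity, ?_, ?_, ?_, ?_⟩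
  · intro a ha b hb h hh
    have hcs : (xi lam πd b - xi lam πd a) ^ 2 ≤ (φ b - φ a) * (π b - π a) := by
      have hx := hdiff (fun x => Real.sqrt (lam x)) hlc.sqrt a ha b hb
      have hp := hdiff lam hlc a ha b hb
      unfold xi
      rw [hx, hφ a ha, hφ b hb, hp, hrep a ha b hb]
      rcases le_total a b with hab | hab
      · exact hx_cs lam πd a b ha.1 hab hb.2 hnn hint hlc hl
      · have := hx_cs lam πd b a hb.1 hab ha.2 hnn hint hlc hl
        rw [intervalIntegral.integral_symm b a, intervalIntegral.integral_symm b a,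
          intervalIntegral.integral_symm b a]
        linarith [this]
    have hG : G a b * (π b - π a) ≤ Ψ b - Ψ a := by
      have e := hdiff f hfc a ha b hb
      have e2 : G a b * (π b - π a) = ∫ x in a..b, G a b * πd x := by
        rw [hrep a ha b hb, intervalIntegral.integral_const_mul]
      rw [e2]
      change _ ≤ (∫ x in (0:ℝ)..b, f x * πd x) - (∫ x in (0:ℝ)..a, f x * πd x)
      rw [e]
      rcases le_total a b with hab | hab
      · apply intervalIntegral.integral_mono_on hab
          (hmulint (fun _ => G a b) continuousOn_const a ha b hb) (hmulint f hfc a ha b hb)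
        intro x hx
        have hxI : x ∈ Icc (0:ℝ) 1 := ⟨ha.1.trans hx.1, hx.2.trans hb.2⟩
        apply mul_le_mul_of_nonneg_right _ (hnn x hxI)
        rw [← hdiag x hxI]
        exact (hGmono b hb ha hxI hx.1).trans (hGanti x hxI hxI hb hx.2)
      · rw [intervalIntegral.integral_symm b a, intervalIntegral.integral_symm b a]
        apply neg_le_neg
        apply intervalIntegral.integral_mono_on hab
          (hmulint f hfc b hb a ha) (hmulint (fun _ => G a b) continuousOn_const b hb a ha)
        intro x hx
        have hxI : x ∈ Icc (0:ℝ) 1 := ⟨hb.1.trans hx.1, hx.2.trans ha.2⟩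
        apply mul_le_mul_of_nonneg_right _ (hnn x hxI)
        rw [← hdiag x hxI]
        exact (hGmono x hxI hxI ha hx.2).trans (hGanti a ha hb hxI hx.1)
    have h3 := div_le_div_of_nonneg_right hcs hh.le
    have h4 : (G a b - (φ b - φ a) / h) * (π b - π a)
      = G a b * (π b - π a) - (φ b - φ a) * (π b - π a) / h := by ring
    rw [h4]; linarith
  · intro a ha b hb
    have e : P b - P a = ∫ x in a..b, π x :=
      intervalIntegral.integral_interval_sub_left (hπint 0 z0 b hb) (hπint 0 z0 a ha)
    have e2 : (b - a) * π b = ∫ x in a..b, π b := by simp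
    rw [e, e2]
    rcases le_total a b with hab | hab
    · apply intervalIntegral.integral_mono_on hab (hπint a ha b hb) (by simp)
      intro x hx
      exact hπmono.monotoneOn ⟨ha.1.trans hx.1, hx.2.trans hb.2⟩ hb hx.2
    · rw [intervalIntegral.integral_symm b a, intervalIntegral.integral_symm b a]
      apply neg_le_neg
      apply intervalIntegral.integral_mono_on hab (by simp) (hπint b hb a ha)
      intro x hx
      exact hπmono.monotoneOn hb ⟨hb.1.trans hx.1, hx.2.trans ha.2⟩ hx.1
  · intro a ha
    have := hB1 a ha
    have := hB2 a ha
    have := hB3 a ha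
    have := le_abs_self B1
    have := le_abs_self B2
    have := le_abs_self B3
    have := abs_nonneg B1
    have := abs_nonneg B2
    have := abs_nonneg B3
    have := abs_nonneg B4
    refine ⟨?_, ?_, ?_⟩ <;> linarith
  · intro a ha b hb
    have := hB4 (a, b) ⟨ha, hb⟩
    have := le_abs_self B4
    have := abs_nonneg B1
    have := abs_nonneg B2
    have := abs_nonneg B3
    simp only at *
    linarith

lemma hx_Icc_succ (m : ℤ) (K : ℕ) :
    Finset.Icc m (m + ((K + 1 : ℕ) : ℤ)) = insert (m + K + 1) (Finset.Icc m (m + K)) := by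
  ext x
  simp only [Finset.mem_Icc, Finset.mem_insert]
  push_cast
  omega

/-- Abel summation with dissipation. -/
lemma hx_abel (F p ψ X : ℤ → ℝ) (m : ℤ) (K : ℕ)
    (h : ∀ j ∈ Finset.Icc (m + 1) (m + K), F j * (p j - p (j - 1)) ≤ ψ j - ψ (j - 1) - X j) :
    F (m + K + 1) * p (m + K) - F m * p m + ∑ j ∈ Finset.Icc (m + 1) (m + K), X j
      - (ψ (m + K) - ψ m) ≤ ∑ j ∈ Finset.Icc m (m + K), (F (j + 1) - F j) * p j := by
  induction K with
  | zero => simp; linarith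
  | succ K ih =>
    have e1 := hx_Icc_succ m K
    have e2 : Finset.Icc (m + 1) (m + ((K + 1 : ℕ) : ℤ))
        = insert (m + K + 1) (Finset.Icc (m + 1) (m + K)) := by
      ext x
      simp only [Finset.mem_Icc, Finset.mem_insert]
      push_cast
      omega
    rw [e2] at h
    have ih' := ih (fun j hj => h j (Finset.mem_insert_of_mem hj))
    have h1 := h _ (Finset.mem_insert_self _ _)
    rw [e1, e2, Finset.sum_insert (by simp), Finset.sum_insert (by simp)]
    have e3 : m + ((K + 1 : ℕ) : ℤ) = m + K + 1 := by push_cast; ring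
    have e4 : m + (K:ℤ) + 1 - 1 = m + K := by ring
    rw [e4] at h1
    rw [e3]
    linarith

lemma hx_interface (π₁ π₂ : ℝ → ℝ) (c d F q B : ℝ)
    (hconn : Connects π₁ π₂ c d)
    (hc0 : c = 0 → 0 ≤ F) (hc1 : c = 1 → F ≤ q) (hd0 : d = 0 → F ≤ 0) (hd1 : d = 1 → q ≤ F)
    (h1 : |π₁ c| ≤ B) (h2 : |π₂ d| ≤ B) :
    F * (π₂ d - π₁ c) ≤ |q| * (2 * B) := by
  obtain ⟨p, hp1, hp2⟩ := hconn
  have hB1 := abs_le.1 h1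
  have hB2 := abs_le.1 h2
  have hq := le_abs_self q
  have hq' := neg_abs_le q
  have hqn := abs_nonneg q
  rcases lt_trichotomy (π₂ d) (π₁ c) with hlt | heq | hgt
  · have hF : -|q| ≤ F := by
      by_cases c0 : c = 0
      · linarith [hc0 c0]
      by_cases d1 : d = 1
      · linarith [hd1 d1]
      exfalso
      have a1 : π₁ c ≤ p := by
        unfold tildePi at hp1
        rw [if_neg c0] at hp1
        split_ifs at hp1 with hh
        · rw [hh]; exact hp1
        · exact (mem_singleton_iff.1 hp1).ge
      have a2 : p ≤ π₂ d := by
        unfold tildePi at hp2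
        rw [if_neg d1] at hp2
        split_ifs at hp2 with hh
        · rw [hh]; exact hp2
        · exact (mem_singleton_iff.1 hp2).le
      linarith
    nlinarith
  · rw [heq]; simp; nlinarith [abs_nonneg (π₁ c)]
  · have hF : F ≤ |q| := by
      by_cases c0 : c = 1
      · linarith [hc1 c0]
      by_cases d1 : d = 0
      · linarith [hd0 d1]
      exfalso
      have a1 : p ≤ π₁ c := by
        unfold tildePi at hp1
        rw [if_neg c0] at hp1
        split_ifs at hp1 with hh
        · rw [hh]; exact hp1
        · exact (mem_singleton_iff.1 hp1).le
      have a2 : π₂ d ≤ p := by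
        unfold tildePi at hp2
        rw [if_neg d1] at hp2
        split_ifs at hp2 with hh
        · rw [hh]; exact hp2
        · exact (mem_singleton_iff.1 hp2).ge
      linarith
    nlinarith

/-- Telescoping in time. -/
lemma hx_time (E D : ℕ → ℝ) (δt K : ℝ) (M : ℕ)
    (h : ∀ n < M, δt * D n ≤ E n - E (n + 1) + δt * K) :
    ∑ n ∈ Finset.range M, δt * D n ≤ E 0 - E M + M * δt * K := by
  have h1 := Finset.sum_le_sum (fun n hn => h n (Finset.mem_range.1 hn))
  refine h1.trans (le_of_eq ?_)
  rw [Finset.sum_add_distrib, Finset.sum_range_sub']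
  simp; ring

lemma hx_acc (P π u' u A : ℤ → ℝ) (s : Finset ℤ) (ϕ δx δt : ℝ) (hϕ : 0 ≤ ϕ) (hδx : 0 ≤ δx)
    (hδt : 0 < δt) (Q : ℤ → ℝ)
    (hs : ∀ j ∈ s, ϕ * (u' j - u j) * δx / δt + A j = 0)
    (hP : ∀ j ∈ s, P j - Q j ≤ (u' j - u j) * π j) :
    δt * ∑ j ∈ s, A j * π j ≤ ϕ * δx * ∑ j ∈ s, Q j - ϕ * δx * ∑ j ∈ s, P j := by
  rw [Finset.mul_sum, Finset.mul_sum, Finset.mul_sum, ← Finset.sum_sub_distrib]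
  apply Finset.sum_le_sum
  intro j hj
  have h1 : A j = - (ϕ * (u' j - u j) * δx / δt) := by linarith [hs j hj]
  have h2 := mul_le_mul_of_nonneg_left (hP j hj) (mul_nonneg hϕ hδx)
  have h3 : δt * (A j * π j) = - (ϕ * δx * ((u' j - u j) * π j)) := by
    rw [h1]; field_simp
  rw [h3]; linarith

lemma hx_Ebound (P : ℤ → ℝ) (s : Finset ℤ) (N : ℕ) (hN : 0 < N) (hcard : s.card = N)
    (ϕ B : ℝ) (hϕ : ϕ ∈ Ioo (0:ℝ) 1) (hB : 0 ≤ B) (h : ∀ j ∈ s, |P j| ≤ B) :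
    |ϕ * (1 / (N:ℝ)) * ∑ j ∈ s, P j| ≤ B := by
  have hN' : (0:ℝ) < N := by exact_mod_cast hN
  have h1 : |∑ j ∈ s, P j| ≤ N * B := by
    refine (Finset.abs_sum_le_sum_abs _ _).trans ?_
    refine (Finset.sum_le_card_nsmul _ _ _ h).trans ?_
    rw [hcard]; simp
  rw [abs_mul, abs_of_nonneg (mul_nonneg hϕ.1.le (by positivity))]
  have h2 : ϕ * (1 / (N:ℝ)) * |∑ j ∈ s, P j| ≤ ϕ * (1 / (N:ℝ)) * (N * B) :=
    mul_le_mul_of_nonneg_left h1 (mul_nonneg hϕ.1.le (by positivity))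
  have h3 : ϕ * (1 / (N:ℝ)) * (N * B) = ϕ * B := by field_simp
  nlinarith [hϕ.2]

/-- Discrete `L²(0,T;H¹)` energy estimate, uniform with respect to the discretization,
the initial vector and the boundary data, including the interface contributions. -/
theorem stmt5
    (T : ℝ) (hT : 0 < T)
    (ϕ₁ ϕ₂ : ℝ) (hϕ₁ : ϕ₁ ∈ Ioo (0:ℝ) 1) (hϕ₂ : ϕ₂ ∈ Ioo (0:ℝ) 1)
    (π₁ π₂ πd₁ πd₂ lam₁ lam₂ φ₁ φ₂ : ℝ → ℝ) (G₁ G₂ : ℝ → ℝ → ℝ)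
    (f₁ f₂ : ℝ → ℝ) (q : ℝ)
    (hπ₁mono : StrictMonoOn π₁ (Icc 0 1)) (hπ₁lip : ∃ K, LipschitzOnWith K π₁ (Icc 0 1))
    (hπ₂mono : StrictMonoOn π₂ (Icc 0 1)) (hπ₂lip : ∃ K, LipschitzOnWith K π₂ (Icc 0 1))
    (hπd₁nonneg : ∀ s ∈ Icc (0:ℝ) 1, 0 ≤ πd₁ s)
    (hπd₂nonneg : ∀ s ∈ Icc (0:ℝ) 1, 0 ≤ πd₂ s)
    (hπd₁int : IntervalIntegrable πd₁ MeasureTheory.volume 0 1)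
    (hπd₂int : IntervalIntegrable πd₂ MeasureTheory.volume 0 1)
    (hπ₁rep : ∀ s ∈ Icc (0:ℝ) 1, ∀ t ∈ Icc (0:ℝ) 1, π₁ t - π₁ s = ∫ a in s..t, πd₁ a)
    (hπ₂rep : ∀ s ∈ Icc (0:ℝ) 1, ∀ t ∈ Icc (0:ℝ) 1, π₂ t - π₂ s = ∫ a in s..t, πd₂ a)
    (hlam₁lip : ∃ K, LipschitzOnWith K lam₁ (Icc 0 1))
    (hlam₂lip : ∃ K, LipschitzOnWith K lam₂ (Icc 0 1))
    (hlam₁nonneg : ∀ s ∈ Icc (0:ℝ) 1, 0 ≤ lam₁ s)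
    (hlam₂nonneg : ∀ s ∈ Icc (0:ℝ) 1, 0 ≤ lam₂ s)
    (hlam₁0 : lam₁ 0 = 0) (hlam₁1 : lam₁ 1 = 0) (hlam₂0 : lam₂ 0 = 0) (hlam₂1 : lam₂ 1 = 0)
    (hφ₁def : ∀ s ∈ Icc (0:ℝ) 1, φ₁ s = ∫ a in (0:ℝ)..s, lam₁ a * πd₁ a)
    (hφ₂def : ∀ s ∈ Icc (0:ℝ) 1, φ₂ s = ∫ a in (0:ℝ)..s, lam₂ a * πd₂ a)
    (hφ₁mono : StrictMonoOn φ₁ (Icc 0 1)) (hφ₁lip : ∃ K, LipschitzOnWith K φ₁ (Icc 0 1))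
    (hφ₁zero : φ₁ 0 = 0)
    (hφ₂mono : StrictMonoOn φ₂ (Icc 0 1)) (hφ₂lip : ∃ K, LipschitzOnWith K φ₂ (Icc 0 1))
    (hφ₂zero : φ₂ 0 = 0)
    (hG₁lip : ∃ K, LipschitzOnWith K (fun p : ℝ × ℝ => G₁ p.1 p.2) (Icc 0 1 ×ˢ Icc 0 1))
    (hG₁mono : ∀ b ∈ Icc (0:ℝ) 1, MonotoneOn (fun a => G₁ a b) (Icc 0 1))
    (hG₁anti : ∀ a ∈ Icc (0:ℝ) 1, AntitoneOn (fun b => G₁ a b) (Icc 0 1))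
    (hG₂lip : ∃ K, LipschitzOnWith K (fun p : ℝ × ℝ => G₂ p.1 p.2) (Icc 0 1 ×ˢ Icc 0 1))
    (hG₂mono : ∀ b ∈ Icc (0:ℝ) 1, MonotoneOn (fun a => G₂ a b) (Icc 0 1))
    (hG₂anti : ∀ a ∈ Icc (0:ℝ) 1, AntitoneOn (fun b => G₂ a b) (Icc 0 1))
    (hf₁lip : ∃ K, LipschitzOnWith K f₁ (Icc 0 1))
    (hf₂lip : ∃ K, LipschitzOnWith K f₂ (Icc 0 1))
    (hG₁diag : ∀ s ∈ Icc (0:ℝ) 1, G₁ s s = f₁ s)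
    (hG₂diag : ∀ s ∈ Icc (0:ℝ) 1, G₂ s s = f₂ s)
    (hf₁0 : f₁ 0 = 0) (hf₂0 : f₂ 0 = 0) (hf₁1 : f₁ 1 = q) (hf₂1 : f₂ 1 = q) :
    ∃ C : ℝ, 0 < C ∧
      ∀ (N M : ℕ), 0 < N → 0 < M →
      ∀ δx δt : ℝ, δx = 1 / (N : ℝ) → δt = T / (M : ℝ) →
      ∀ c d : ℝ → ℝ → ℝ,
      (∀ a ∈ Icc (0:ℝ) 1, ∀ b ∈ Icc (0:ℝ) 1,
        (c a b ∈ Icc (0:ℝ) 1 ∧ d a b ∈ Icc (0:ℝ) 1 ∧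
          G₁ a (c a b) - 2 * (φ₁ (c a b) - φ₁ a) / δx
            = G₂ (d a b) b - 2 * (φ₂ b - φ₂ (d a b)) / δx ∧
          Connects π₁ π₂ (c a b) (d a b)) ∧
        ∀ c' d' : ℝ, c' ∈ Icc (0:ℝ) 1 → d' ∈ Icc (0:ℝ) 1 →
          G₁ a c' - 2 * (φ₁ c' - φ₁ a) / δx = G₂ d' b - 2 * (φ₂ b - φ₂ d') / δx →
          Connects π₁ π₂ c' d' → c' = c a b ∧ d' = d a b) →
      ∀ ubar ubbar : ℕ → ℝ,
      (∀ n, 1 ≤ n → n ≤ M → ubar n ∈ Icc (0:ℝ) 1) →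
      (∀ n, 1 ≤ n → n ≤ M → ubbar n ∈ Icc (0:ℝ) 1) →
      ∀ u : ℕ → ℤ → ℝ,
      IsDiscreteSolution G₁ G₂ φ₁ φ₂ c ϕ₁ ϕ₂ δx δt (N : ℤ) M ubar ubbar u →
        (∑ n ∈ Finset.range M, δt *
            ∑ j ∈ Finset.Icc (-(N : ℤ) + 1) (-1),
              (xi lam₁ πd₁ (u (n + 1) j) - xi lam₁ πd₁ (u (n + 1) (j - 1))) ^ 2 / δx)
        + (∑ n ∈ Finset.range M, δt *
            ∑ j ∈ Finset.Icc (1 : ℤ) ((N : ℤ) - 1),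
              (xi lam₂ πd₂ (u (n + 1) j) - xi lam₂ πd₂ (u (n + 1) (j - 1))) ^ 2 / δx)
        + (∑ n ∈ Finset.range M, δt *
            ((xi lam₁ πd₁ (c (u (n + 1) (-1)) (u (n + 1) 0))
                - xi lam₁ πd₁ (u (n + 1) (-1))) ^ 2 / (δx / 2)
             + (xi lam₂ πd₂ (u (n + 1) 0)
                - xi lam₂ πd₂ (d (u (n + 1) (-1)) (u (n + 1) 0))) ^ 2 / (δx / 2)))
        ≤ C := by
  obtain ⟨Ψ₁, P₁, B₁, hB₁, hA₁, hP₁, hb₁, hG₁b⟩ := hx_side π₁ πd₁ lam₁ φ₁ f₁ G₁ hπ₁lip hπ₁mono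
    hπd₁nonneg hπd₁int hπ₁rep hlam₁lip hlam₁nonneg hφ₁def hG₁lip hG₁mono hG₁anti hf₁lip hG₁diag
  obtain ⟨Ψ₂, P₂, B₂, hB₂, hA₂, hP₂, hb₂, hG₂b⟩ := hx_side π₂ πd₂ lam₂ φ₂ f₂ G₂ hπ₂lip hπ₂mono
    hπd₂nonneg hπd₂int hπ₂rep hlam₂lip hlam₂nonneg hφ₂def hG₂lip hG₂mono hG₂anti hf₂lip hG₂diag
  set Kc : ℝ := B₁ * B₁ + B₂ * B₂ + 4 * B₁ + 4 * B₂ + |q| * (2 * (B₁ + B₂)) with hKc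
  have hKc0 : 0 ≤ Kc := by positivity
  have z0 : (0:ℝ) ∈ Icc (0:ℝ) 1 := by simp
  have z1 : (1:ℝ) ∈ Icc (0:ℝ) 1 := by simp
  refine ⟨2 * B₁ + 2 * B₂ + T * Kc + 1, by positivity, ?_⟩
  intro N M hN hM δx δt hδx hδt c d hcd ubar ubbar hubar hubbar u ⟨hrange, hsol⟩
  have hN' : (0:ℝ) < N := by exact_mod_cast hN
  have hM' : (0:ℝ) < M := by exact_mod_cast hM
  have hδx0 : 0 < δx := by rw [hδx]; positivity
  have hδt0 : 0 < δt := by rw [hδt]; positivity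
  set E : ℕ → ℝ := fun n => ϕ₁ * δx * ∑ j ∈ Finset.Icc (-(N:ℤ)) (-1), P₁ (u n j)
    + ϕ₂ * δx * ∑ j ∈ Finset.Icc (0:ℤ) ((N:ℤ) - 1), P₂ (u n j) with hE
  have hEb : ∀ n ≤ M, |E n| ≤ B₁ + B₂ := by
    intro n hn
    refine (abs_add_le _ _).trans (add_le_add ?_ ?_)
    · rw [hδx]
      apply hx_Ebound (fun j => P₁ (u n j)) _ N hN (by simp) ϕ₁ B₁ hϕ₁ hB₁
      intro j hj
      rw [Finset.mem_Icc] at hj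
      exact (hb₁ _ (hrange n hn j (Finset.mem_Icc.2 (by omega)))).2.2
    · rw [hδx]
      apply hx_Ebound (fun j => P₂ (u n j)) _ N hN (by simp) ϕ₂ B₂ hϕ₂ hB₂
      intro j hj
      rw [Finset.mem_Icc] at hj
      exact (hb₂ _ (hrange n hn j (Finset.mem_Icc.2 (by omega)))).2.2
  rw [← Finset.sum_add_distrib, ← Finset.sum_add_distrib]
  simp only [← mul_add]
  have hstep := hx_time E (fun n => 
            ∑ j ∈ Finset.Icc (-(N : ℤ) + 1) (-1),
              (xi lam₁ πd₁ (u (n + 1) j) - xi lam₁ πd₁ (u (n + 1) (j - 1))) ^ 2 / δx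
        + ∑ j ∈ Finset.Icc (1 : ℤ) ((N : ℤ) - 1),
              (xi lam₂ πd₂ (u (n + 1) j) - xi lam₂ πd₂ (u (n + 1) (j - 1))) ^ 2 / δx
        + ((xi lam₁ πd₁ (c (u (n + 1) (-1)) (u (n + 1) 0))
                - xi lam₁ πd₁ (u (n + 1) (-1))) ^ 2 / (δx / 2)
             + (xi lam₂ πd₂ (u (n + 1) 0)
                - xi lam₂ πd₂ (d (u (n + 1) (-1)) (u (n + 1) 0))) ^ 2 / (δx / 2))) δt Kc M ?_
  · refine hstep.trans ?_
    have h0 := abs_le.1 (hEb 0 (Nat.zero_le _))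
    have h1 := abs_le.1 (hEb M le_rfl)
    have h2 : (M:ℝ) * δt = T := by rw [hδt]; field_simp
    rw [h2]
    linarith [h0.2, h1.1]
  intro n hn
  have hv : ∀ j : ℤ, -(N:ℤ) ≤ j → j ≤ N - 1 → u (n + 1) j ∈ Icc (0:ℝ) 1 :=
    fun j h1 h2 => hrange (n + 1) hn j (Finset.mem_Icc.2 ⟨h1, h2⟩)
  have hv0 : ∀ j : ℤ, -(N:ℤ) ≤ j → j ≤ N - 1 → u n j ∈ Icc (0:ℝ) 1 :=
    fun j h1 h2 => hrange n hn.le j (Finset.mem_Icc.2 ⟨h1, h2⟩)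
  set v := u (n + 1) with hvdef
  set F : ℤ → ℝ := numFlux G₁ G₂ φ₁ φ₂ c δx N (ubar (n + 1)) (ubbar (n + 1)) v with hF
  have hsol' : ∀ j : ℤ, -(N:ℤ) ≤ j → j ≤ N - 1 →
      phiCoef ϕ₁ ϕ₂ j * (v j - u n j) * δx / δt + (F (j + 1) - F j) = 0 := by
    intro j h1 h2
    have := hsol n hn j (Finset.mem_Icc.2 ⟨h1, h2⟩)
    unfold schemeLHS at this
    rw [← this]; simp only [hF, hvdef]; ring
  -- the accumulation terms
  have hacc1 := hx_acc (fun j => P₁ (v j)) (fun j => π₁ (v j)) v (u n) (fun j => F (j + 1) - F j)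
    (Finset.Icc (-(N:ℤ)) (-1)) ϕ₁ δx δt hϕ₁.1.le hδx0.le hδt0 (fun j => P₁ (u n j))
    (by
      intro j hj
      rw [Finset.mem_Icc] at hj
      have := hsol' j hj.1 (by omega)
      rwa [phiCoef, if_pos (by omega)] at this)
    (by
      intro j hj
      rw [Finset.mem_Icc] at hj
      exact hP₁ _ (hv0 j hj.1 (by omega)) _ (hv j hj.1 (by omega)))
  have hacc2 := hx_acc (fun j => P₂ (v j)) (fun j => π₂ (v j)) v (u n) (fun j => F (j + 1) - F j)
    (Finset.Icc (0:ℤ) ((N:ℤ) - 1)) ϕ₂ δx δt hϕ₂.1.le hδx0.le hδt0 (fun j => P₂ (u n j))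
    (by
      intro j hj
      rw [Finset.mem_Icc] at hj
      have := hsol' j (by omega) hj.2
      rwa [phiCoef, if_neg (by omega)] at this)
    (by
      intro j hj
      rw [Finset.mem_Icc] at hj
      exact hP₂ _ (hv0 j (by omega) hj.2) _ (hv j (by omega) hj.2))
  -- the flux terms
  have e1 : -(N:ℤ) + ((N - 1 : ℕ) : ℤ) = -1 := by omega
  have e2 : (0:ℤ) + ((N - 1 : ℕ) : ℤ) = N - 1 := by omega
  have hab1 := hx_abel F (fun j => π₁ (v j)) (fun j => Ψ₁ (v j))
    (fun j => (xi lam₁ πd₁ (v j) - xi lam₁ πd₁ (v (j - 1))) ^ 2 / δx) (-(N:ℤ)) (N - 1)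
    (by
      intro j hj
      rw [e1, Finset.mem_Icc] at hj
      have hFj : F j = G₁ (v (j - 1)) (v j) - (φ₁ (v j) - φ₁ (v (j - 1))) / δx := by
        rw [hF, numFlux, if_neg (by omega), if_neg (by omega), if_pos (by omega)]
      rw [hFj]
      exact hA₁ _ (hv _ (by omega) (by omega)) _ (hv _ (by omega) (by omega)) δx hδx0)
  have hab2 := hx_abel F (fun j => π₂ (v j)) (fun j => Ψ₂ (v j))
    (fun j => (xi lam₂ πd₂ (v j) - xi lam₂ πd₂ (v (j - 1))) ^ 2 / δx) 0 (N - 1)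
    (by
      intro j hj
      rw [e2, Finset.mem_Icc] at hj
      have hFj : F j = G₂ (v (j - 1)) (v j) - (φ₂ (v j) - φ₂ (v (j - 1))) / δx := by
        rw [hF, numFlux, if_neg (by omega), if_neg (by omega), if_neg (by omega),
          if_neg (by omega)]
      rw [hFj]
      exact hA₂ _ (hv _ (by omega) (by omega)) _ (hv _ (by omega) (by omega)) δx hδx0)
  rw [e1] at hab1
  rw [e2] at hab2
  have e3 : (-1 : ℤ) + 1 = 0 := by norm_num
  have e4 : (N : ℤ) - 1 + 1 = N := by ring
  have e5 : (0 : ℤ) + 1 = 1 := by norm_num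
  rw [e3] at hab1
  rw [e4, e5] at hab2
  -- values of fluxes
  have va : v (-1) ∈ Icc (0:ℝ) 1 := hv _ (by omega) (by omega)
  have vb : v 0 ∈ Icc (0:ℝ) 1 := hv _ (by omega) (by omega)
  have vl : v (-(N:ℤ)) ∈ Icc (0:ℝ) 1 := hv _ (by omega) (by omega)
  have vr : v ((N:ℤ) - 1) ∈ Icc (0:ℝ) 1 := hv _ (by omega) (by omega)
  obtain ⟨⟨hcI, hdI, hcdeq, hconn⟩, -⟩ := hcd _ va _ vb
  set c0 := c (v (-1)) (v 0) with hc0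
  set d0 := d (v (-1)) (v 0) with hd0
  have hFl : F (-(N:ℤ)) = G₁ (ubar (n + 1)) (v (-(N:ℤ))) := by
    rw [hF, numFlux, if_pos rfl]
  have hFr : F (N:ℤ) = G₂ (v ((N:ℤ) - 1)) (ubbar (n + 1)) := by
    rw [hF, numFlux, if_neg (by omega), if_pos rfl]
  have hF0 : F 0 = G₁ (v (-1)) c0 - 2 * (φ₁ c0 - φ₁ (v (-1))) / δx := by
    rw [hF, numFlux, if_neg (by omega), if_neg (by omega), if_neg (by omega), if_pos rfl]
  have hF0' : F 0 = G₂ d0 (v 0) - 2 * (φ₂ (v 0) - φ₂ d0) / δx := hF0.trans hcdeq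
  have hi1 : F 0 * (π₁ c0 - π₁ (v (-1))) ≤ Ψ₁ c0 - Ψ₁ (v (-1))
      - (xi lam₁ πd₁ c0 - xi lam₁ πd₁ (v (-1))) ^ 2 / (δx / 2) := by
    have := hA₁ _ va _ hcI (δx / 2) (by positivity)
    have e : F 0 = G₁ (v (-1)) c0 - (φ₁ c0 - φ₁ (v (-1))) / (δx / 2) := by
      rw [hF0]; field_simp
    rw [e]; exact this
  have hi2 : F 0 * (π₂ (v 0) - π₂ d0) ≤ Ψ₂ (v 0) - Ψ₂ d0
      - (xi lam₂ πd₂ (v 0) - xi lam₂ πd₂ d0) ^ 2 / (δx / 2) := by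
    have := hA₂ _ hdI _ vb (δx / 2) (by positivity)
    have e : F 0 = G₂ d0 (v 0) - (φ₂ (v 0) - φ₂ d0) / (δx / 2) := by
      rw [hF0']; field_simp
    rw [e]; exact this
  have hmid : F 0 * (π₂ d0 - π₁ c0) ≤ |q| * (2 * (B₁ + B₂)) := by
    apply hx_interface π₁ π₂ c0 d0 (F 0) q (B₁ + B₂) hconn
    · intro h
      rw [hF0, h]
      have g1 : G₁ 0 0 ≤ G₁ (v (-1)) 0 := hG₁mono 0 z0 z0 va va.1
      have g2 : φ₁ 0 ≤ φ₁ (v (-1)) := hφ₁mono.monotoneOn z0 va va.1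
      have g3 : 2 * (φ₁ 0 - φ₁ (v (-1))) / δx ≤ 0 :=
        div_nonpos_of_nonpos_of_nonneg (by linarith) hδx0.le
      rw [hG₁diag 0 z0, hf₁0] at g1
      linarith
    · intro h
      rw [hF0, h]
      have g1 : G₁ (v (-1)) 1 ≤ G₁ 1 1 := hG₁mono 1 z1 va z1 va.2
      have g2 : φ₁ (v (-1)) ≤ φ₁ 1 := hφ₁mono.monotoneOn va z1 va.2
      have g3 : 0 ≤ 2 * (φ₁ 1 - φ₁ (v (-1))) / δx :=
        div_nonneg (by linarith) hδx0.le
      rw [hG₁diag 1 z1, hf₁1] at g1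
      linarith
    · intro h
      rw [hF0', h]
      have g1 : G₂ 0 (v 0) ≤ G₂ 0 0 := hG₂anti 0 z0 z0 vb vb.1
      have g2 : φ₂ 0 ≤ φ₂ (v 0) := hφ₂mono.monotoneOn z0 vb vb.1
      have g3 : 0 ≤ 2 * (φ₂ (v 0) - φ₂ 0) / δx :=
        div_nonneg (by linarith) hδx0.le
      rw [hG₂diag 0 z0, hf₂0] at g1
      linarith
    · intro h
      rw [hF0', h]
      have g1 : G₂ 1 1 ≤ G₂ 1 (v 0) := hG₂anti 1 z1 vb z1 vb.2
      have g2 : φ₂ (v 0) ≤ φ₂ 1 := hφ₂mono.monotoneOn vb z1 vb.2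
      have g3 : 2 * (φ₂ (v 0) - φ₂ 1) / δx ≤ 0 :=
        div_nonpos_of_nonpos_of_nonneg (by linarith) hδx0.le
      rw [hG₂diag 1 z1, hf₂1] at g1
      linarith
    · exact (hb₁ _ hcI).1.trans (by linarith)
    · exact (hb₂ _ hdI).1.trans (by linarith)
  have hbl : F (-(N:ℤ)) * π₁ (v (-(N:ℤ))) ≤ B₁ * B₁ := by
    rw [hFl]
    refine (le_abs_self _).trans ?_
    rw [abs_mul]
    exact mul_le_mul (hG₁b _ (hubar _ (by omega) (by omega)) _ vl) (hb₁ _ vl).1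
      (abs_nonneg _) hB₁
  have hbr : -(B₂ * B₂) ≤ F (N:ℤ) * π₂ (v ((N:ℤ) - 1)) := by
    rw [hFr]
    refine le_trans (neg_le_neg ?_) (neg_abs_le _)
    rw [abs_mul]
    exact mul_le_mul (hG₂b _ vr _ (hubbar _ (by omega) (by omega))) (hb₂ _ vr).1
      (abs_nonneg _) hB₂
  have p1 := abs_le.1 (hb₁ _ va).2.1
  have p2 := abs_le.1 (hb₁ _ vl).2.1
  have p3 := abs_le.1 (hb₁ _ hcI).2.1
  have p4 := abs_le.1 (hb₂ _ vb).2.1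
  have p5 := abs_le.1 (hb₂ _ vr).2.1
  have p6 := abs_le.1 (hb₂ _ hdI).2.1
  have hD : ∑ j ∈ Finset.Icc (-(N : ℤ) + 1) (-1),
              (xi lam₁ πd₁ (v j) - xi lam₁ πd₁ (v (j - 1))) ^ 2 / δx
        + ∑ j ∈ Finset.Icc (1 : ℤ) ((N : ℤ) - 1),
              (xi lam₂ πd₂ (v j) - xi lam₂ πd₂ (v (j - 1))) ^ 2 / δx
        + ((xi lam₁ πd₁ c0 - xi lam₁ πd₁ (v (-1))) ^ 2 / (δx / 2)
             + (xi lam₂ πd₂ (v 0) - xi lam₂ πd₂ d0) ^ 2 / (δx / 2))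
      ≤ ∑ j ∈ Finset.Icc (-(N:ℤ)) (-1), (F (j + 1) - F j) * π₁ (v j)
        + ∑ j ∈ Finset.Icc (0:ℤ) ((N:ℤ) - 1), (F (j + 1) - F j) * π₂ (v j) + Kc := by
    rw [hKc]
    linarith [p1.1, p1.2, p2.1, p2.2, p3.1, p3.2, p4.1, p4.2, p5.1, p5.2, p6.1, p6.2]
  have hD' := mul_le_mul_of_nonneg_left hD hδt0.le
  refine hD'.trans ?_
  simp only [hE, ← hvdef]
  linarith
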